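/- arXiv:math/0403094 — 3 statements merged into one kernel-verified Lean document; each statement's English description precedes it below -/
import Mathlib

section
/- The map A ↦ fi(A)* determines a bijection between the set of antichains in the dominance order Dom(n) on partitions of n and the set of S_n-invariant blockers in the partition lattice Π_n (i.e. the S_n-invariant antichains of Π_n of the form C* for some antichain C). -/
open Finset

/-- The blocker of a set `A` in a poset with bottom element: the minimal elements among
those having a common atom with every member of `A`. -/
def blocker {P : Type*} [PartialOrder P] [OrderBot P] (A : Set P) : Set P :=
  {x | (∀ a ∈ A, ∃ l : P, IsAtom l ∧ l ≤ x ∧ l ≤ a) ∧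
    ∀ y : P, (∀ a ∈ A, ∃ l : P, IsAtom l ∧ l ≤ y ∧ l ≤ a) → y ≤ x → y = x}

/-- An antichain in a poset with bottom element, in the sense of Björner–Hultman:
a nonempty set avoiding `⊥` whose elements are pairwise incomparable. -/
def IsAnti {P : Type*} [PartialOrder P] [OrderBot P] (A : Set P) : Prop :=
  A.Nonempty ∧ ⊥ ∉ A ∧ IsAntichain (· ≤ ·) A

/-- The partition lattice `Π_n`: set partitions of `{1,…,n}`, ordered by refinement. -/
abbrev SetPart (n : ℕ) := Finpartition (univ : Finset (Fin n))

/-- The shape of a set partition: the number partition formed by its block sizes. -/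
def shape {n : ℕ} (σ : SetPart n) : Nat.Partition n where
  parts := σ.parts.val.map Finset.card
  parts_pos := by
    intro i hi
    simp only [Multiset.mem_map, Finset.mem_val] at hi
    obtain ⟨p, hp, rfl⟩ := hi
    exact Finset.card_pos.mpr (σ.nonempty_of_mem_parts hp)
  parts_sum := by
    have h := σ.sum_card_parts
    rw [Finset.sum] at h
    rw [h, card_univ, Fintype.card_fin]

/-- The fiber under the shape map of a set `S` of number partitions: all set
partitions whose shape lies in `S`. -/
def fi {n : ℕ} (S : Set (Nat.Partition n)) : Set (SetPart n) :=
  {σ | shape σ ∈ S}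


/-- The sum of the `k` largest parts of a number partition. -/
def topSum {n : ℕ} (μ : Nat.Partition n) (k : ℕ) : ℕ :=
  (((μ.parts.sort (· ≤ ·)).reverse).take k).sum

/-- The dominance order `Dom(n)` on partitions of `n`: `μ ≤ ν` iff for every `k`
the sum of the `k` largest parts of `μ` is at most that of `ν`. -/
def DomLE {n : ℕ} (μ ν : Nat.Partition n) : Prop :=
  ∀ k, topSum μ k ≤ topSum ν k

/-- The partition of `n` into `n` parts equal to `1`; this is the bottom element of
both the refinement order and the dominance order on partitions of `n`. -/
def onesPart (n : ℕ) : Nat.Partition n where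
  parts := Multiset.replicate n 1
  parts_pos := by
    intro i hi
    rw [Multiset.eq_of_mem_replicate hi]
    exact one_pos
  parts_sum := by simp

/-- The action of a permutation of `{1,…,n}` on set partitions of `{1,…,n}`. -/
def permAct {n : ℕ} (g : Equiv.Perm (Fin n)) (σ : SetPart n) : SetPart n :=
  (σ.map (g.finsetCongr.toOrderIso
      (fun s t h => by
        simp only [Equiv.finsetCongr_apply]
        exact Finset.map_subset_map.2 h)
      (fun s t h => by
        simp only [Equiv.finsetCongr_symm, Equiv.finsetCongr_apply]
        exact Finset.map_subset_map.2 h))).copy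
    (Finset.map_univ_equiv g)

/-- A set of set partitions is `S_n`-invariant if it is closed under the action of
the symmetric group `S_n` on `Π_n`. -/
def SnInvariant {n : ℕ} (A : Set (SetPart n)) : Prop :=
  ∀ g : Equiv.Perm (Fin n), ∀ σ ∈ A, permAct g σ ∈ A

/-! Sharing an atom means not being disjoint, so `A*` consists of the minimal elements of the
upper set `transversals A`, and `A*` and `transversals A` determine each other. Two facts relate
disjointness in `Π_n` to dominance. If the blocks of `σ` are the rows of a bijective filling of a
Young diagram and `x` has the columns as blocks, then every set partition disjoint from `x` has
shape at most that of `σ`. Conversely, if `x` is disjoint from `σ` and `μ` is dominated by the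
shape of `σ`, then points can be moved one at a time from a larger block of `σ` to a later one,
staying disjoint from `x`, until the shape is `μ`. Hence `fi(A)*` and the upper closure of `A` in
`Dom(n)` determine each other, and an antichain is the set of minimal elements of its upper
closure. An invariant blocker `B` is attained because `transversals B` is again invariant, hence a
union of fibers of the shape map, and its blocker is `B`. -/

theorem upperClosure_setOf_minimal {P : Type*} [PartialOrder P] [WellFoundedLT P]
    (S : Set P) :
    upperClosure {a | Minimal (· ∈ S) a} = upperClosure S := by
  refine SetLike.coe_injective (Set.Subset.antisymm ?_ ?_)
  · exact (upperClosure_anti fun _ (ha : Minimal (· ∈ S) _) => ha.prop : upperClosure S ≤ _)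
  · rintro x hx
    obtain ⟨a, ha, hax⟩ := mem_upperClosure.1 hx
    obtain ⟨b, hba, hb⟩ := exists_minimal_le_of_wellFoundedLT (· ∈ S) a ha
    exact mem_upperClosure.2 ⟨b, hb, hba.trans hax⟩

section Transversals

variable {P : Type*}

section Basic

variable [PartialOrder P] [OrderBot P]

/-- The elements of `P` whose set of atoms meets the set of atoms below every member of `A`;
the blocker of `A` consists of its minimal elements. Sharing an atom is encoded as not being
`Disjoint`, see `not_disjoint_iff_exists_isAtom`. -/
def transversals (A : Set P) : Set P :=
  {x | ∀ a ∈ A, ¬Disjoint x a}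

theorem isUpperSet_transversals (A : Set P) : IsUpperSet (transversals A) :=
  fun _ _ hxy hx a ha hd => hx a ha (hd.mono_left hxy)

theorem transversals_anti : Antitone (transversals (P := P)) :=
  fun _ _ hAB _ hx a ha => hx a (hAB ha)

theorem subset_transversals_transversals (A : Set P) : A ⊆ transversals (transversals A) :=
  fun a ha _ hx hd => hx a ha hd.symm

theorem transversals_transversals_transversals (A : Set P) :
    transversals (transversals (transversals A)) = transversals A :=
  (transversals_anti (subset_transversals_transversals A)).antisymm
    (subset_transversals_transversals _)

theorem transversals_upperClosure (A : Set P) :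
    transversals (upperClosure A : Set P) = transversals A := by
  refine (transversals_anti subset_upperClosure).antisymm fun x hx b hb hd => ?_
  obtain ⟨a, ha, hab⟩ := mem_upperClosure.1 hb
  exact hx a ha (hd.mono_right hab)

theorem bot_notMem_transversals {A : Set P} (hA : A.Nonempty) : ⊥ ∉ transversals A := by
  obtain ⟨a, ha⟩ := hA
  exact fun h => h a ha disjoint_bot_left

end Basic

theorem top_mem_transversals [PartialOrder P] [OrderBot P] [OrderTop P] {A : Set P} (hA : ⊥ ∉ A) :
    ⊤ ∈ transversals A :=
  fun _ ha hd => hA (le_bot_iff.1 (hd le_top le_rfl) ▸ ha)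

theorem transversals_image {Q : Type*} [SemilatticeInf P] [OrderBot P] [SemilatticeInf Q]
    [OrderBot Q] (e : P ≃o Q) (A : Set P) : transversals (e '' A) = e '' transversals A := by
  ext x
  obtain ⟨x, rfl⟩ := e.surjective x
  simp [transversals]

end Transversals

section Blocker

variable {P : Type*} [PartialOrder P] [OrderBot P] [IsAtomic P]

theorem not_disjoint_iff_exists_isAtom {x a : P} :
    ¬Disjoint x a ↔ ∃ l, IsAtom l ∧ l ≤ x ∧ l ≤ a := by
  constructor
  · intro h
    simp only [Disjoint, not_forall, le_bot_iff] at h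
    obtain ⟨z, hzx, hza, hz⟩ := h
    obtain ⟨l, hl, hlz⟩ := (eq_bot_or_exists_atom_le z).resolve_left hz
    exact ⟨l, hl, hlz.trans hzx, hlz.trans hza⟩
  · rintro ⟨l, hl, hlx, hla⟩ hd
    exact hl.ne_bot (le_bot_iff.1 (hd hlx hla))

theorem blocker_eq_setOf_minimal (A : Set P) :
    blocker A = {x | Minimal (· ∈ transversals A) x} := by
  ext x
  simp only [blocker, ← not_disjoint_iff_exists_isAtom, Set.mem_ofPred_eq, minimal_iff]
  exact and_congr_right fun _ => forall₂_congr fun y _ => imp_congr_right fun _ => eq_comm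

theorem upperClosure_blocker [WellFoundedLT P] (A : Set P) :
    (upperClosure (blocker A) : Set P) = transversals A := by
  rw [blocker_eq_setOf_minimal, upperClosure_setOf_minimal,
    (isUpperSet_transversals A).upperClosure]

theorem blocker_eq_blocker_iff [WellFoundedLT P] {A B : Set P} :
    blocker A = blocker B ↔ transversals A = transversals B := by
  refine ⟨fun h => ?_, fun h => ?_⟩
  · rw [← upperClosure_blocker, h, upperClosure_blocker]
  · rw [blocker_eq_setOf_minimal, h, blocker_eq_setOf_minimal]

theorem blocker_transversals_blocker [WellFoundedLT P] (A : Set P) :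
    blocker (transversals (blocker A)) = blocker A := by
  rw [blocker_eq_blocker_iff, ← transversals_upperClosure (blocker A), upperClosure_blocker,
    transversals_transversals_transversals]

end Blocker

theorem isAnti_blocker {P : Type*} [PartialOrder P] [OrderBot P] [OrderTop P] [IsAtomic P]
    [WellFoundedLT P] {A : Set P} (hne : A.Nonempty) (hbot : ⊥ ∉ A) : IsAnti (blocker A) := by
  rw [blocker_eq_setOf_minimal]
  exact ⟨exists_minimal_of_wellFoundedLT _ ⟨⊤, top_mem_transversals hbot⟩,
    fun h => bot_notMem_transversals hne h.prop, setOfPred_minimal_antichain _⟩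

theorem blocker_image {P Q : Type*} [SemilatticeInf P] [OrderBot P] [IsAtomic P]
    [SemilatticeInf Q] [OrderBot Q] [IsAtomic Q] (e : P ≃o Q) (A : Set P) :
    blocker (e '' A) = e '' blocker A := by
  rw [blocker_eq_setOf_minimal, blocker_eq_setOf_minimal, transversals_image,
    image_monotone_setOfPred_minimal_mem fun _ _ _ _ => e.le_iff_le]

theorem apply_eq_of_le_apply {P : Type*} [PartialOrder P] [Finite P] (e : P ≃o P) {x : P}
    (h : x ≤ e x) : e x = x := by
  obtain ⟨m, hm, hper⟩ : x ∈ Function.periodicPts e := e.injective.mem_periodicPts x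
  refine le_antisymm ?_ h
  calc e x ≤ e^[m] x := e.monotone.monotone_iterate_of_le_map h (Nat.one_le_iff_ne_zero.2 hm.ne')
    _ = x := hper

section KerPartition

variable {α β γ : Type*} [Fintype α] [DecidableEq α]

theorem finpartition_le_iff_part_subset {P Q : Finpartition (univ : Finset α)} :
    P ≤ Q ↔ ∀ a, P.part a ⊆ Q.part a := by
  constructor
  · intro h a
    obtain ⟨q, hq, hpq⟩ := h (P.part_mem.2 (mem_univ a))
    rwa [Q.part_eq_of_mem hq (hpq (P.mem_part_self.2 (mem_univ a)))]
  · intro h p hp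
    obtain ⟨a, ha⟩ := P.nonempty_of_mem_parts hp
    exact ⟨Q.part a, Q.part_mem.2 (mem_univ a), P.part_eq_of_mem hp ha ▸ h a⟩

open scoped Classical in
/-- The partition of `α` into the nonempty fibers of `f`. -/
noncomputable def kerPartition (f : α → β) : Finpartition (univ : Finset α) :=
  Finpartition.ofSetoid (Setoid.ker f)

theorem mem_part_kerPartition {f : α → β} {a b : α} :
    b ∈ (kerPartition f).part a ↔ f a = f b := by
  classical
  rw [kerPartition, Finpartition.mem_part_ofSetoid_iff_rel, Setoid.ker_def]

theorem part_kerPartition [DecidableEq β] (f : α → β) (a : α) :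
    (kerPartition f).part a = ({b | f b = f a} : Finset α) := by
  ext b
  rw [mem_part_kerPartition, mem_filter_univ, eq_comm]

theorem parts_kerPartition [DecidableEq β] (f : α → β) :
    (kerPartition f).parts = (univ.image f).image fun c => ({b | f b = c} : Finset α) := by
  ext p
  simp only [image_image, mem_image, mem_univ, true_and, Function.comp_apply, ← part_kerPartition]
  constructor
  · intro hp
    obtain ⟨a, ha⟩ := (kerPartition f).nonempty_of_mem_parts hp
    exact ⟨a, (kerPartition f).part_eq_of_mem hp ha⟩
  · rintro ⟨a, rfl⟩
    exact (kerPartition f).part_mem.2 (mem_univ a)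

theorem le_kerPartition_iff {P : Finpartition (univ : Finset α)} {f : α → β} :
    P ≤ kerPartition f ↔ ∀ a, ∀ b ∈ P.part a, f a = f b := by
  simp only [finpartition_le_iff_part_subset, subset_iff, mem_part_kerPartition]

theorem kerPartition_part (P : Finpartition (univ : Finset α)) : kerPartition P.part = P := by
  refine le_antisymm (finpartition_le_iff_part_subset.2 fun a b hb => ?_)
    (le_kerPartition_iff.2 fun a b hb => ?_)
  · rw [mem_part_kerPartition.1 hb]
    exact P.mem_part_self.2 (mem_univ b)
  · exact (P.part_eq_of_mem (P.part_mem.2 (mem_univ a)) hb).symm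

theorem finpartition_part_injective :
    Function.Injective (Finpartition.part : Finpartition (univ : Finset α) → α → Finset α) :=
  Function.LeftInverse.injective kerPartition_part

theorem kerPartition_eq_kerPartition_iff {f : α → β} {g : α → γ} :
    kerPartition f = kerPartition g ↔ ∀ a b, f a = f b ↔ g a = g b := by
  simp only [← finpartition_part_injective.eq_iff, funext_iff, Finset.ext_iff,
    mem_part_kerPartition]

theorem kerPartition_eq_bot_iff {f : α → β} : kerPartition f = ⊥ ↔ Function.Injective f := by
  have part_bot (a : α) : (⊥ : Finpartition (univ : Finset α)).part a = {a} :=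
    Finpartition.part_eq_of_mem _ (Finpartition.mem_bot_iff.2 ⟨a, mem_univ a, rfl⟩)
      (mem_singleton_self a)
  simp only [← le_bot_iff, finpartition_le_iff_part_subset, subset_iff, mem_part_kerPartition,
    part_bot, mem_singleton, Function.Injective]
  exact forall₂_congr fun a b => imp_congr_right fun _ => eq_comm

theorem le_kerPartition_prodMk_iff {P : Finpartition (univ : Finset α)} {f : α → β} {g : α → γ} :
    P ≤ kerPartition (fun a => (f a, g a)) ↔ P ≤ kerPartition f ∧ P ≤ kerPartition g := by
  simp only [le_kerPartition_iff, Prod.mk.injEq, forall_and]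

theorem disjoint_kerPartition_iff {f : α → β} {g : α → γ} :
    Disjoint (kerPartition f) (kerPartition g) ↔ Function.Injective fun a => (f a, g a) := by
  rw [← kerPartition_eq_bot_iff, ← le_bot_iff]
  exact ⟨fun h => (le_kerPartition_prodMk_iff.1 le_rfl).elim fun hf hg => h hf hg,
    fun h _ hf hg => (le_kerPartition_prodMk_iff.2 ⟨hf, hg⟩).trans h⟩

end KerPartition

section Action

variable {n : ℕ}

theorem parts_permAct (g : Equiv.Perm (Fin n)) (σ : SetPart n) :
    (permAct g σ).parts = σ.parts.map (Finset.mapEmbedding g.toEmbedding).toEmbedding := by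
  ext p
  change p ∈ σ.parts.map _ ↔ _
  rw [mem_map, mem_map]
  rfl

theorem part_permAct (g : Equiv.Perm (Fin n)) (σ : SetPart n) (i : Fin n) :
    (permAct g σ).part (g i) = (σ.part i).map g.toEmbedding := by
  apply Finpartition.part_eq_of_mem
  · rw [parts_permAct]
    exact mem_map_of_mem _ (σ.part_mem.2 (mem_univ i))
  · exact mem_map_of_mem _ (σ.mem_part_self.2 (mem_univ i))

theorem permAct_kerPartition {β : Type*} (g : Equiv.Perm (Fin n)) (f : Fin n → β) :
    permAct g (kerPartition f) = kerPartition (f ∘ g.symm) := by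
  apply finpartition_part_injective
  ext i j
  obtain ⟨i, rfl⟩ := g.surjective i
  simp [part_permAct, mem_part_kerPartition, mem_map_equiv]

theorem permAct_symm_permAct (g : Equiv.Perm (Fin n)) (σ : SetPart n) :
    permAct g.symm (permAct g σ) = σ := by
  rw [← kerPartition_part σ, permAct_kerPartition, permAct_kerPartition, Function.comp_assoc,
    Equiv.self_comp_symm, Function.comp_id]

theorem permAct_le_permAct_iff (g : Equiv.Perm (Fin n)) {σ τ : SetPart n} :
    permAct g σ ≤ permAct g τ ↔ σ ≤ τ := by
  rw [finpartition_le_iff_part_subset, g.surjective.forall, finpartition_le_iff_part_subset]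
  simp only [part_permAct, map_subset_map]

/-- The action of `g` on `Π_n` as an automorphism of the partition lattice. -/
def permIso (g : Equiv.Perm (Fin n)) : SetPart n ≃o SetPart n where
  toFun := permAct g
  invFun := permAct g.symm
  left_inv := permAct_symm_permAct g
  right_inv := permAct_symm_permAct g.symm
  map_rel_iff' := permAct_le_permAct_iff g

theorem snInvariant_iff_image_permIso {A : Set (SetPart n)} :
    SnInvariant A ↔ ∀ g, permIso g '' A = A := by
  refine ⟨fun h g => (Set.image_subset_iff.2 (h g)).antisymm fun σ hσ => ?_,
    fun h g => Set.image_subset_iff.1 (h g).subset⟩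
  exact ⟨permAct g.symm σ, h _ _ hσ, permAct_symm_permAct g.symm σ⟩

theorem SnInvariant.transversals {A : Set (SetPart n)} (hA : SnInvariant A) :
    SnInvariant (transversals A) := by
  rw [snInvariant_iff_image_permIso] at hA ⊢
  exact fun g => by rw [← transversals_image, hA g]

theorem SnInvariant.blocker {A : Set (SetPart n)} (hA : SnInvariant A) :
    SnInvariant (blocker A) := by
  rw [snInvariant_iff_image_permIso] at hA ⊢
  exact fun g => by rw [← blocker_image, hA g]

theorem shape_permAct (g : Equiv.Perm (Fin n)) (σ : SetPart n) :
    shape (permAct g σ) = shape σ := by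
  apply Nat.Partition.ext
  simp only [shape, parts_permAct, Finset.map_val, Multiset.map_map]
  exact Multiset.map_congr rfl fun p _ => card_map g.toEmbedding

theorem snInvariant_fi (S : Set (Nat.Partition n)) : SnInvariant (fi S) := by
  intro g σ hσ
  simpa only [fi, Set.mem_ofPred_eq, shape_permAct] using hσ

end Action

section YoungDiagram

theorem sum_take_rowLens (Y : YoungDiagram) (k : ℕ) :
    (Y.rowLens.take k).sum = ∑ i ∈ range k, Y.rowLen i := by
  rw [YoungDiagram.rowLens, ← List.map_take, List.take_range]
  change ∑ i ∈ range (min k (Y.colLen 0)), Y.rowLen i = _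
  refine sum_subset (range_subset_range.2 (min_le_left _ _)) fun i hik hi => ?_
  have hcol : Y.colLen 0 ≤ i := by
    simp only [mem_range] at hik hi
    omega
  by_contra h
  have hmem : (i, 0) ∈ Y := YoungDiagram.mem_iff_lt_rowLen.2 (Nat.pos_of_ne_zero h)
  exact hcol.not_gt (YoungDiagram.mem_iff_lt_colLen.1 hmem)

theorem card_eq_sum_rowLen (Y : YoungDiagram) :
    Y.card = ∑ i ∈ range (Y.colLen 0), Y.rowLen i := by
  have hrow : ∀ c ∈ Y.cells, c.1 ∈ range (Y.colLen 0) := fun c hc =>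
    mem_range.2 (YoungDiagram.mem_iff_lt_colLen.1 (Y.up_left_mem le_rfl (Nat.zero_le _) hc))
  rw [YoungDiagram.card, card_eq_sum_card_fiberwise hrow]
  exact sum_congr rfl fun i _ => (Y.rowLen_eq_card).symm

theorem card_cells_row (Y : YoungDiagram) (i : ℕ) :
    #{c : Y.cells | c.1.1 = i} = Y.rowLen i := by
  rw [univ_eq_attach, filter_attach (fun c : ℕ × ℕ => c.1 = i), card_map, card_attach,
    YoungDiagram.rowLen_eq_card, YoungDiagram.row]

variable {n : ℕ}

/-- The Young diagram whose row lengths are the parts of `μ` in decreasing order. -/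
def youngDiagram (μ : Nat.Partition n) : YoungDiagram :=
  YoungDiagram.ofRowLens (μ.parts.sort (· ≤ ·)).reverse
    (List.sortedGE_reverse.2 (Multiset.pairwise_sort _ _).sortedLE)

theorem rowLens_youngDiagram (μ : Nat.Partition n) :
    (youngDiagram μ).rowLens = (μ.parts.sort (· ≤ ·)).reverse :=
  YoungDiagram.rowLens_ofRowLens_eq_self fun i hi =>
    μ.parts_pos (by simpa only [List.mem_reverse, Multiset.mem_sort] using hi)

theorem coe_rowLens_youngDiagram (μ : Nat.Partition n) :
    ((youngDiagram μ).rowLens : Multiset ℕ) = μ.parts := by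
  rw [rowLens_youngDiagram, Multiset.coe_reverse, Multiset.sort_eq]

theorem card_youngDiagram (μ : Nat.Partition n) : (youngDiagram μ).card = n := by
  calc (youngDiagram μ).card = (youngDiagram μ).rowLens.sum := card_eq_sum_rowLen _
    _ = μ.parts.sum := by rw [← coe_rowLens_youngDiagram, Multiset.sum_coe]
    _ = n := μ.parts_sum

theorem topSum_eq_sum_rowLen (μ : Nat.Partition n) (k : ℕ) :
    topSum μ k = ∑ i ∈ range k, (youngDiagram μ).rowLen i := by
  rw [topSum, ← rowLens_youngDiagram, sum_take_rowLens]

theorem domLE_antisymm {μ ν : Nat.Partition n} (h : DomLE μ ν) (h' : DomLE ν μ) : μ = ν := by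
  have hsum (k : ℕ) : topSum μ k = topSum ν k := (h k).antisymm (h' k)
  have hrow : (youngDiagram μ).rowLen = (youngDiagram ν).rowLen := by
    simp only [topSum_eq_sum_rowLen] at hsum
    funext k
    simpa only [sum_range_succ, hsum k, Nat.add_left_cancel_iff] using hsum (k + 1)
  have hdiagram : youngDiagram μ = youngDiagram ν := by
    ext ⟨i, j⟩
    rw [YoungDiagram.mem_cells, YoungDiagram.mem_cells, YoungDiagram.mem_iff_lt_rowLen,
      YoungDiagram.mem_iff_lt_rowLen, hrow]
  apply Nat.Partition.ext
  rw [← coe_rowLens_youngDiagram, hdiagram, coe_rowLens_youngDiagram]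

/-- The dominance order `Dom(n)`, a local instance below because number partitions also carry the
refinement order. -/
abbrev domOrder (n : ℕ) : PartialOrder (Nat.Partition n) where
  le := DomLE
  le_refl _ _ := le_rfl
  le_trans _ _ _ h h' k := (h k).trans (h' k)
  le_antisymm _ _ := domLE_antisymm

end YoungDiagram

attribute [local instance] domOrder

section Fibers

variable {α β γ : Type*} [Fintype α]

theorem exists_equiv_of_card_fiber_eq [Fintype β] [DecidableEq γ] (f : α → γ) (g : β → γ)
    (h : ∀ c, #{a | f a = c} = #{b | g b = c}) : ∃ e : α ≃ β, ∀ a, g (e a) = f a := by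
  have he (c : γ) : Nonempty ({a // f a = c} ≃ {b // g b = c}) := by
    rw [← Fintype.card_eq, Fintype.card_subtype, Fintype.card_subtype, h]
  exact ⟨Equiv.ofFiberEquiv fun c => (he c).some, Equiv.ofFiberEquiv_map _⟩

theorem card_filter_lt_eq_sum_card_fiber (f : α → ℕ) (k : ℕ) :
    #{a | f a < k} = ∑ c ∈ range k, #{a | f a = c} := by
  rw [card_eq_sum_card_fiberwise (f := f) (t := range k) fun a ha => by simpa using ha]
  refine sum_congr rfl fun c hc => ?_
  rw [filter_filter]
  refine congrArg card (filter_congr fun a _ => and_iff_right_of_imp ?_)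
  rintro rfl
  exact mem_range.1 hc

end Fibers

section RowLabelling

variable {n : ℕ} {μ : Nat.Partition n} {f : Fin n → ℕ}

/-- `f` labels the points of `{1,…,n}` by the rows of the Young diagram of `μ`: the number of
points labelled `c` is the `c`-th largest part of `μ`, counting from `0`. -/
def IsRowLabelling (μ : Nat.Partition n) (f : Fin n → ℕ) : Prop :=
  ∀ c, #{i | f i = c} = (youngDiagram μ).rowLen c

theorem IsRowLabelling.card_filter_lt (hf : IsRowLabelling μ f) (k : ℕ) :
    #{i | f i < k} = topSum μ k := by
  rw [card_filter_lt_eq_sum_card_fiber, topSum_eq_sum_rowLen]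
  exact sum_congr rfl fun c _ => hf c

theorem parts_shape_kerPartition {β : Type*} [DecidableEq β] (f : Fin n → β) :
    (shape (kerPartition f)).parts = (univ.image f).val.map fun c => #{i | f i = c} := by
  have hinj : Set.InjOn (fun c => ({i | f i = c} : Finset (Fin n))) (univ.image f) := by
    intro c hc d _ hcd
    obtain ⟨i, -, rfl⟩ := mem_image.1 hc
    simpa using Finset.ext_iff.1 hcd i
  simp only [shape, parts_kerPartition, image_val_of_injOn hinj, Multiset.map_map]
  rfl

theorem shape_bot : shape (⊥ : SetPart n) = onesPart n := by
  apply Nat.Partition.ext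
  rw [← kerPartition_eq_bot_iff.2 Function.injective_id, parts_shape_kerPartition]
  simp [onesPart, filter_eq']

theorem IsRowLabelling.shape_kerPartition (hf : IsRowLabelling μ f) :
    shape (kerPartition f) = μ := by
  have himage : univ.image f = range ((youngDiagram μ).colLen 0) := by
    ext c
    rw [mem_range, ← YoungDiagram.mem_iff_lt_colLen, YoungDiagram.mem_iff_lt_rowLen, ← hf,
      card_pos, filter_nonempty_iff, mem_image]
  apply Nat.Partition.ext
  rw [parts_shape_kerPartition, himage, ← coe_rowLens_youngDiagram]
  exact Multiset.map_congr rfl fun c _ => hf c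

theorem isRowLabelling_of_equiv (e : Fin n ≃ (youngDiagram μ).cells) :
    IsRowLabelling μ fun i => (e i).1.1 := by
  intro c
  rw [← card_cells_row]
  exact card_equiv e (by simp)

theorem IsRowLabelling.exists_equiv (hf : IsRowLabelling μ f) :
    ∃ e : Fin n ≃ (youngDiagram μ).cells, ∀ i, (e i).1.1 = f i :=
  exists_equiv_of_card_fiber_eq f (fun c : (youngDiagram μ).cells => c.1.1) fun c => by
    rw [hf, card_cells_row]

theorem exists_isRowLabelling (μ : Nat.Partition n) : ∃ f, IsRowLabelling μ f := by
  have e : Fin n ≃ (youngDiagram μ).cells := (equivFinOfCardEq (card_youngDiagram μ)).symm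
  exact ⟨_, isRowLabelling_of_equiv e⟩

theorem exists_shape_eq (μ : Nat.Partition n) : ∃ σ : SetPart n, shape σ = μ :=
  (exists_isRowLabelling μ).imp' kerPartition fun _ hf => hf.shape_kerPartition

theorem card_filter_card_block_eq (σ : SetPart n) (c : ℕ) :
    #{p : σ.parts | #p.1 = c} = (shape σ).parts.count c := by
  rw [shape, Multiset.count_map, univ_eq_attach, filter_attach (fun p => #p = c), card_map,
    card_attach]
  simp only [eq_comm (a := c)]
  rfl

theorem card_filter_part_eq (σ : SetPart n) (p : σ.parts) :
    #{i | (⟨σ.part i, σ.part_mem.2 (mem_univ i)⟩ : σ.parts) = p} = #p.1 := by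
  congr 1
  ext i
  rw [mem_filter_univ, Subtype.ext_iff, σ.part_eq_iff_mem p.2]

theorem exists_permAct_eq {σ τ : SetPart n} (h : shape σ = shape τ) :
    ∃ g, permAct g σ = τ := by
  obtain ⟨e, he⟩ := exists_equiv_of_card_fiber_eq (fun p : σ.parts => #p.1)
    (fun p : τ.parts => #p.1) fun c => by
      rw [card_filter_card_block_eq, card_filter_card_block_eq, h]
  obtain ⟨g, hg⟩ := exists_equiv_of_card_fiber_eq
    (fun i => (⟨σ.part i, σ.part_mem.2 (mem_univ i)⟩ : σ.parts))
    (fun i => e.symm ⟨τ.part i, τ.part_mem.2 (mem_univ i)⟩) fun p => by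
      simp only [Equiv.symm_apply_eq, card_filter_part_eq, he]
  refine ⟨g, ?_⟩
  rw [← kerPartition_part σ, ← kerPartition_part τ, permAct_kerPartition,
    kerPartition_eq_kerPartition_iff]
  intro i j
  simpa [Subtype.ext_iff] using (congrArg₂ Eq (hg (g.symm i)) (hg (g.symm j))).symm

theorem exists_isRowLabelling_kerPartition_eq (σ : SetPart n) :
    ∃ f, IsRowLabelling (shape σ) f ∧ kerPartition f = σ := by
  obtain ⟨f, hf⟩ := exists_isRowLabelling (shape σ)
  obtain ⟨g, hg⟩ := exists_permAct_eq hf.shape_kerPartition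
  rw [permAct_kerPartition] at hg
  refine ⟨_, fun c => ?_, hg⟩
  rw [← hf c]
  exact card_equiv g.symm (by simp)

end RowLabelling

section Columns

variable {α β : Type*} [Fintype α] {f r : α → ℕ} {g : α → β}

theorem card_filter_lt_fiber_le [DecidableEq β] (hf : Function.Injective fun a => (f a, g a))
    (k : ℕ) (d : β) : #{a | f a < k ∧ g a = d} ≤ k := by
  conv_rhs => rw [← card_range k]
  refine card_le_card_of_injOn f (fun a ha => ?_) fun a ha a' ha' h => hf (Prod.ext h ?_)
  · exact mem_coe.2 (mem_range.2 (mem_filter_univ _ |>.1 ha).1)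
  · exact (mem_filter_univ _ |>.1 ha).2.trans (mem_filter_univ _ |>.1 ha').2.symm

theorem le_card_filter_lt_fiber [DecidableEq β]
    (hr : ∀ z, ∀ c ≤ r z, ∃ w, r w = c ∧ g w = g z) {z : α} {k : ℕ} (hz : k ≤ r z) :
    k ≤ #{a | r a < k ∧ g a = g z} := by
  conv_lhs => rw [← card_range k]
  refine card_le_card_of_surjOn r fun c hc => ?_
  have hck : c < k := mem_range.1 hc
  obtain ⟨w, rfl, hw⟩ := hr z c (hck.le.trans hz)
  exact ⟨w, mem_coe.2 ((mem_filter_univ _).2 ⟨hck, hw⟩), rfl⟩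

theorem card_filter_lt_le_of_columns (hf : Function.Injective fun a => (f a, g a))
    (hr : ∀ z, ∀ c ≤ r z, ∃ w, r w = c ∧ g w = g z) (k : ℕ) :
    #{a | f a < k} ≤ #{a | r a < k} := by
  classical
  have hmaps (p : α → Prop) [DecidablePred p] :
      ∀ a ∈ ({a | p a} : Finset α), g a ∈ univ.image g :=
    fun a _ => mem_image_of_mem g (mem_univ a)
  rw [card_eq_sum_card_fiberwise (hmaps _), card_eq_sum_card_fiberwise (hmaps fun a => r a < k)]
  refine sum_le_sum fun d _ => ?_
  simp only [filter_filter]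
  by_cases! hk : ∃ z, g z = d ∧ k ≤ r z
  · obtain ⟨z, rfl, hz⟩ := hk
    exact (card_filter_lt_fiber_le hf k (g z)).trans (le_card_filter_lt_fiber hr hz)
  · exact card_le_card (monotone_filter_right _ fun a _ ha => ⟨hk a ha.2, ha.2⟩)

end Columns

section Shift

theorem exists_surplus_lt_deficit {b s : ℕ → ℕ} {N : ℕ}
    (hle : ∀ k, ∑ c ∈ range k, b c ≤ ∑ c ∈ range k, s c)
    (hN : ∀ k, ∑ c ∈ range k, s c ≤ ∑ c ∈ range N, b c) (hne : s ≠ b) :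
    ∃ i j, i < j ∧ b i < s i ∧ s j < b j ∧
      ∀ k, i < k → k ≤ j → ∑ c ∈ range k, b c < ∑ c ∈ range k, s c := by
  have hex : ∃ j, s j < b j := by
    by_contra! h
    obtain ⟨i, hi⟩ := Function.ne_iff.1 hne
    have hlt : ∑ c ∈ range (max N (i + 1)), b c < ∑ c ∈ range (max N (i + 1)), s c :=
      sum_lt_sum (fun c _ => h c) ⟨i, mem_range.2 (by omega), (h i).lt_of_ne' hi⟩
    exact hlt.not_ge ((hN _).trans
      (sum_le_sum_of_subset (range_subset_range.2 (le_max_left _ _))))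
  obtain ⟨j, hj, hmin⟩ : ∃ j, s j < b j ∧ ∀ c < j, b c ≤ s c :=
    ⟨Nat.find hex, Nat.find_spec hex, fun c hc => not_lt.1 (Nat.find_min hex hc)⟩
  have hlt : ∑ c ∈ range j, b c < ∑ c ∈ range j, s c := by
    have hsucc := hle (j + 1)
    simp only [sum_range_succ] at hsucc
    omega
  obtain ⟨i, hij, hi⟩ := exists_lt_of_sum_lt hlt
  rw [mem_range] at hij
  refine ⟨i, j, hij, hi, hj, fun k hik hkj => ?_⟩
  exact sum_lt_sum (fun c hc => hmin c (by rw [mem_range] at hc; omega))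
    ⟨i, mem_range.2 hik, hi⟩

variable {α β γ : Type*} [Fintype α]

theorem exists_injective_update [DecidableEq α] [DecidableEq γ] {f : α → γ} {g : α → β} {i j : γ}
    (hinj : Function.Injective fun a => (f a, g a)) (hcard : #{a | f a = j} < #{a | f a = i}) :
    ∃ u, f u = i ∧ Function.Injective fun a => (Function.update f u j a, g a) := by
  classical
  have hcard_image (c : γ) : #(image g {a | f a = c}) = #{a | f a = c} :=
    card_image_of_injOn fun a ha a' ha' h => hinj (Prod.ext (by simp_all) h)
  rw [← hcard_image i, ← hcard_image j] at hcard
  obtain ⟨d, hd, hdj⟩ := exists_mem_notMem_of_card_lt_card hcard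
  obtain ⟨u, hu, rfl⟩ := mem_image.1 hd
  have hfree : ∀ a, f a = j → g a ≠ g u := fun a ha h =>
    hdj (mem_image.2 ⟨a, (mem_filter_univ a).2 ha, h⟩)
  rw [mem_filter_univ] at hu
  refine ⟨u, hu, fun a a' h => ?_⟩
  rw [Prod.mk.injEq] at h
  obtain ⟨hf, hg⟩ := h
  rcases eq_or_ne a u with hau | ha <;> rcases eq_or_ne a' u with ha'u | ha'
  · rw [hau, ha'u]
  · rw [hau, Function.update_self, Function.update_of_ne ha'] at hf
    exact absurd (hau ▸ hg.symm) (hfree a' hf.symm)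
  · rw [ha'u, Function.update_self, Function.update_of_ne ha] at hf
    exact absurd (ha'u ▸ hg) (hfree a hf)
  · rw [Function.update_of_ne ha, Function.update_of_ne ha'] at hf
    exact hinj (Prod.ext hf hg)

/-- A labelling `f` which is injective on the fibers of `g` and whose fiber sizes dominate `b`.
Starting from such an `f`, points are moved to larger labels until the fiber sizes are `b`. -/
structure IsAdmissible (b : ℕ → ℕ) (g : α → β) (f : α → ℕ) : Prop where
  injective : Function.Injective fun a => (f a, g a)
  sum_le (k : ℕ) : ∑ c ∈ range k, b c ≤ #{a | f a < k}

variable {b : ℕ → ℕ} {g : α → β} {f : α → ℕ} {N : ℕ}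

theorem IsAdmissible.lt (hf : IsAdmissible b g f) (hN : Fintype.card α ≤ ∑ c ∈ range N, b c)
    (a : α) : f a < N := by
  have huniv : ({a | f a < N} : Finset α) = univ :=
    eq_univ_of_card _ ((card_le_univ _).antisymm (hN.trans (hf.sum_le N)))
  exact (mem_filter_univ a).1 (huniv ▸ mem_univ a)

theorem IsAdmissible.exists_gt (hf : IsAdmissible b g f) (hb : Antitone b)
    (hN : Fintype.card α ≤ ∑ c ∈ range N, b c) (hne : (fun c => #{a | f a = c}) ≠ b) :
    ∃ f', f < f' ∧ IsAdmissible b g f' := by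
  classical
  have hsum := card_filter_lt_eq_sum_card_fiber f
  obtain ⟨i, j, hij, hi, hj, hgap⟩ :=
    exists_surplus_lt_deficit (fun k => (hf.sum_le k).trans_eq (hsum k))
      (fun k => hsum k ▸ (card_le_univ _).trans hN) hne
  obtain ⟨u, rfl, hinj⟩ :=
    exists_injective_update hf.injective (hj.trans_le (hb hij.le) |>.trans hi)
  refine ⟨Function.update f u j, lt_update_self_iff.2 hij, hinj, fun k => ?_⟩
  by_cases hk : f u < k ∧ k ≤ j
  · have hlt := hgap k hk.1 hk.2
    have hsub :
        ({a | f a < k} : Finset α).erase u ⊆ ({a | Function.update f u j a < k} : Finset α) := by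
      intro a ha
      rw [mem_erase, mem_filter_univ] at ha
      rw [mem_filter_univ, Function.update_of_ne ha.1]
      exact ha.2
    rw [← hsum] at hlt
    have herase := pred_card_le_card_erase.trans (card_le_card hsub)
    omega
  · refine (hf.sum_le k).trans (card_le_card (monotone_filter_right _ fun a _ ha => ?_))
    rw [Function.update_apply]
    split_ifs with hau
    · subst hau
      omega
    · exact ha

theorem IsAdmissible.exists_card_fiber_eq (hf : IsAdmissible b g f) (hb : Antitone b)
    (hN : Fintype.card α ≤ ∑ c ∈ range N, b c) :
    ∃ f' : α → ℕ, Function.Injective (fun a => (f' a, g a)) ∧ ∀ c, #{a | f' a = c} = b c := by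
  have hfinite : {f | IsAdmissible b g f}.Finite :=
    (Set.Finite.pi' fun _ => Set.finite_Iio N).subset fun f hf a => hf.lt hN a
  obtain ⟨f', -, hf', hmax⟩ := hfinite.exists_le_maximal hf
  refine ⟨f', hf'.injective, congrFun ?_⟩
  by_contra hne
  obtain ⟨f'', hlt, hf''⟩ := hf'.exists_gt hb hN hne
  exact hlt.not_ge (hmax hf'' hlt.le)

end Shift

section Dominance

variable {n : ℕ} {μ : Nat.Partition n} {x σ τ : SetPart n}

theorem exists_disjoint_dominating (σ : SetPart n) :
    ∃ x, Disjoint x σ ∧ ∀ τ, Disjoint x τ → shape τ ≤ shape σ := by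
  obtain ⟨r, hr, rfl⟩ := exists_isRowLabelling_kerPartition_eq σ
  generalize shape (kerPartition r) = μ at hr ⊢
  obtain ⟨e, he⟩ := hr.exists_equiv
  refine ⟨kerPartition fun i => (e i).1.2, ?_, fun τ hτ k => ?_⟩
  · rw [disjoint_kerPartition_iff]
    intro i j h
    simp only [Prod.mk.injEq, ← he] at h
    exact e.injective (Subtype.ext (Prod.ext h.2 h.1))
  · obtain ⟨f, hf, rfl⟩ := exists_isRowLabelling_kerPartition_eq τ
    rw [← hf.card_filter_lt, ← hr.card_filter_lt]
    refine card_filter_lt_le_of_columns (disjoint_kerPartition_iff.1 hτ.symm) (fun z c hc => ?_) k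
    have hmem : (c, (e z).1.2) ∈ (youngDiagram μ).cells :=
      (youngDiagram μ).up_left_mem (hc.trans_eq (he z).symm) le_rfl (e z).2
    exact ⟨e.symm ⟨_, hmem⟩, by simp [← he], by simp⟩

theorem exists_disjoint_of_le_shape (hx : Disjoint x σ) (hμ : μ ≤ shape σ) :
    ∃ τ, shape τ = μ ∧ Disjoint x τ := by
  obtain ⟨f, hf, rfl⟩ := exists_isRowLabelling_kerPartition_eq σ
  rw [← kerPartition_part x, disjoint_comm, disjoint_kerPartition_iff] at hx
  have hadm : IsAdmissible (youngDiagram μ).rowLen x.part f :=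
    ⟨hx, fun k => by rw [hf.card_filter_lt, ← topSum_eq_sum_rowLen]; exact hμ k⟩
  have hN : Fintype.card (Fin n) ≤ ∑ c ∈ range ((youngDiagram μ).colLen 0),
      (youngDiagram μ).rowLen c := by
    rw [Fintype.card_fin, ← card_eq_sum_rowLen, card_youngDiagram]
  obtain ⟨f', hinj, hcard⟩ :=
    hadm.exists_card_fiber_eq (fun _ _ => (youngDiagram μ).rowLen_anti _ _) hN
  refine ⟨kerPartition f', IsRowLabelling.shape_kerPartition hcard, ?_⟩
  rw [← kerPartition_part x]
  exact (disjoint_kerPartition_iff.2 hinj).symm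

theorem shape_mono : Monotone (shape (n := n)) := by
  intro σ τ h
  obtain ⟨x, hx, hdom⟩ := exists_disjoint_dominating τ
  exact hdom σ (hx.mono_right h)

theorem eq_of_le_of_shape_eq (h : σ ≤ τ) (hs : shape σ = shape τ) : σ = τ := by
  obtain ⟨g, rfl⟩ := exists_permAct_eq hs
  exact (apply_eq_of_le_apply (permIso g) h).symm

theorem shape_strictMono : StrictMono (shape (n := n)) := fun _ _ h =>
  (shape_mono h.le).lt_of_ne fun hs => h.ne (eq_of_le_of_shape_eq h.le hs)

theorem isAnti_fi {A : Set (Nat.Partition n)} (hne : A.Nonempty) (hones : onesPart n ∉ A)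
    (hA : IsAntichain (· ≤ ·) A) : IsAnti (fi A) := by
  refine ⟨?_, fun h => hones (shape_bot (n := n) ▸ h), fun σ hσ τ hτ hne h => ?_⟩
  · obtain ⟨μ, hμ⟩ := hne
    obtain ⟨σ, rfl⟩ := exists_shape_eq μ
    exact ⟨σ, hμ⟩
  · exact hA hσ hτ (shape_strictMono (h.lt_of_ne hne)).ne (shape_mono h)

theorem SnInvariant.fi_image_shape {A : Set (SetPart n)} (hA : SnInvariant A) :
    fi (shape '' A) = A := by
  refine Set.Subset.antisymm ?_ fun σ hσ => ⟨σ, hσ, rfl⟩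
  rintro τ ⟨σ, hσ, h⟩
  obtain ⟨g, rfl⟩ := exists_permAct_eq h
  exact hA g σ hσ

theorem transversals_fi_subset_iff {A B : Set (Nat.Partition n)} :
    transversals (fi A) ⊆ transversals (fi B) ↔ upperClosure A ≤ upperClosure B := by
  rw [le_upperClosure]
  constructor
  · intro h μ hμ
    obtain ⟨σ, rfl⟩ := exists_shape_eq μ
    obtain ⟨x, hx, hdom⟩ := exists_disjoint_dominating σ
    have hxA : x ∉ transversals (fi A) := fun hxA => h hxA σ hμ hx
    simp only [transversals, Set.mem_ofPred_eq, not_forall, not_not] at hxA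
    obtain ⟨τ, hτ, hd⟩ := hxA
    exact mem_upperClosure.2 ⟨shape τ, hτ, hdom τ hd⟩
  · intro h x hx σ hσ hd
    obtain ⟨μ, hμ, hle⟩ := mem_upperClosure.1 (h hσ)
    obtain ⟨τ, rfl, hτ⟩ := exists_disjoint_of_le_shape hd hle
    exact hx τ hμ hτ

theorem blocker_fi_eq_blocker_fi_iff {A B : Set (Nat.Partition n)} :
    blocker (fi A) = blocker (fi B) ↔ upperClosure A = upperClosure B := by
  rw [blocker_eq_blocker_iff, Set.Subset.antisymm_iff, transversals_fi_subset_iff,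
    transversals_fi_subset_iff, le_antisymm_iff]

end Dominance

/-- Corollary 3.4: the map `A ↦ fi(A)*` is a bijection from the antichains in the
dominance order `Dom(n)` onto the `S_n`-invariant blockers in `Π_n` (the
`S_n`-invariant antichains of the form `C*` for an antichain `C`). -/
theorem bijOn_domAntichains_blockers (n : ℕ) :
    Set.BijOn (fun A => blocker (fi A))
      {A : Set (Nat.Partition n) | A.Nonempty ∧ onesPart n ∉ A ∧ IsAntichain DomLE A}
      {B : Set (SetPart n) | SnInvariant B ∧
        ∃ C : Set (SetPart n), IsAnti C ∧ blocker C = B} := by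
  refine ⟨?_, ?_, ?_⟩
  · rintro A ⟨hne, hones, hA⟩
    exact ⟨(snInvariant_fi A).blocker, fi A, isAnti_fi hne hones hA, rfl⟩
  · rintro A ⟨-, -, hA⟩ B ⟨-, -, hB⟩ hAB
    have hup : upperClosure A = upperClosure B := blocker_fi_eq_blocker_fi_iff.1 hAB
    ext μ
    rw [← hA.minimal_mem_upperClosure_iff_mem, hup, hB.minimal_mem_upperClosure_iff_mem]
  · rintro B ⟨hinv, C, ⟨hCne, hCbot, -⟩, rfl⟩
    obtain ⟨hne, hbot, -⟩ := isAnti_blocker hCne hCbot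
    set S := shape '' transversals (blocker C)
    refine ⟨{μ | Minimal (· ∈ S) μ}, ⟨?_, fun h => ?_, setOfPred_minimal_antichain _⟩, ?_⟩
    · exact exists_minimal_of_wellFoundedLT _ ⟨_, ⊤, top_mem_transversals hbot, rfl⟩
    · obtain ⟨σ, hσ, hshape⟩ := h.prop
      rw [← shape_bot] at hshape
      exact bot_notMem_transversals hne (eq_of_le_of_shape_eq bot_le hshape.symm ▸ hσ)
    · calc blocker (fi {μ | Minimal (· ∈ S) μ})
          = blocker (fi S) := blocker_fi_eq_blocker_fi_iff.2 (upperClosure_setOf_minimal S)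
        _ = blocker (transversals (blocker C)) := by rw [hinv.transversals.fi_image_shape]
        _ = blocker C := blocker_transversals_blocker C
end

section
/- Let r ≥ 3. In the partition lattice Π_{2r}, the blocker of the antichain fi((2^r)) of all perfect-matching-type set partitions (r blocks of size 2) is fi((r+1, 1^{r-1})), and fi((2^r)) does not have the Turán property: there is an fi((2^r))-intersecting set of atoms of cardinality 2r − 1 (the edges of a star at a fixed vertex), which is strictly smaller than |Λ(b)| = (r+1)r/2 for every b ∈ fi((2^r))*. -/
/-!
For a nonempty set `T` of points, `singleBlock T` has block `T` and all its other blocks are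
singletons. It lies below `σ` exactly when `T` is contained in a block of `σ`, so the minimal
partitions having a block of size at least `m ≥ 2` are the `singleBlock T` with `#T = m`. For
`m = 2` these are the atoms.

Suppose there are `k * r` points. A partition `σ` shares an atom with every partition into `r`
blocks of size `k` if and only if `σ` has a block with more than `r` points. One direction is the
pigeonhole principle. For the other, if all blocks of `σ` have at most `r` points, list the points
block by block: points at distance at least `r` in the list lie in different blocks, so grouping
the points by their position modulo `r` yields a partition into blocks of size `k` disjoint
from `σ`. Hence the blocker consists of the `singleBlock T` with `#T = r + 1`.
-/

open Finset

/-- The hook-shaped number partition `(p, 1^{n-p})`: one part equal to `p` and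
`n - p` parts equal to `1`. -/
def hook (n p : ℕ) (hp : 0 < p) (hpn : p ≤ n) : Nat.Partition n where
  parts := p ::ₘ Multiset.replicate (n - p) 1
  parts_pos := by
    intro i hi
    simp only [Multiset.mem_cons, Multiset.mem_replicate] at hi
    rcases hi with rfl | ⟨-, rfl⟩
    · exact hp
    · exact one_pos
  parts_sum := by
    simp only [Multiset.sum_cons, Multiset.sum_replicate, smul_eq_mul, mul_one]
    omega

/-- The partition `(2^r)` of `2r`: `r` parts equal to `2` (the shape of a perfect
matching on `2r` points). -/
def matchingShape (r : ℕ) : Nat.Partition (2 * r) where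
  parts := Multiset.replicate r 2
  parts_pos := by
    intro i hi
    rw [Multiset.eq_of_mem_replicate hi]
    exact two_pos
  parts_sum := by
    simp only [Multiset.sum_replicate, smul_eq_mul]
    omega

lemma exists_isAtom_le_le_iff_not_disjoint {P : Type*} [PartialOrder P] [OrderBot P] [IsAtomic P]
    {x y : P} : (∃ l, IsAtom l ∧ l ≤ x ∧ l ≤ y) ↔ ¬ Disjoint x y := by
  constructor
  · rintro ⟨l, hl, hlx, hly⟩ hxy
    exact hl.1 (le_bot_iff.1 (hxy hlx hly))
  · intro hxy
    obtain ⟨z, hzx, hzy, hz⟩ : ∃ z ≤ x, z ≤ y ∧ z ≠ ⊥ := by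
      simpa only [Disjoint, le_bot_iff, not_forall, exists_prop] using hxy
    obtain ⟨l, hl, hlz⟩ := (eq_bot_or_exists_atom_le z).resolve_left hz
    exact ⟨l, hl, hlz.trans hzx, hlz.trans hzy⟩

lemma mem_blocker_iff_minimal {P : Type*} [PartialOrder P] [OrderBot P] [IsAtomic P]
    {A : Set P} {x : P} :
    x ∈ blocker A ↔ Minimal (fun y ↦ ∀ a ∈ A, ¬ Disjoint y a) x := by
  simp only [blocker, exists_isAtom_le_le_iff_not_disjoint, minimal_iff, eq_comm (a := x)]
  rfl

lemma isAtom_iff_minimal_ne_bot {P : Type*} [PartialOrder P] [OrderBot P] {x : P} :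
    IsAtom x ↔ Minimal (· ≠ ⊥) x := by
  simp only [IsAtom, minimal_iff_forall_lt, not_not]

section Finpartition

variable {α : Type*} [DecidableEq α] {s : Finset α} {σ τ : Finpartition s}

lemma eq_bot_iff_card_parts_le_one : σ = ⊥ ↔ ∀ p ∈ σ.parts, #p ≤ 1 := by
  constructor
  · rintro rfl p hp
    obtain ⟨a, -, rfl⟩ := Finpartition.mem_bot_iff.1 hp
    exact (card_singleton a).le
  · refine fun h ↦ le_bot_iff.1 fun p hp ↦ ?_
    obtain ⟨a, ha⟩ := σ.nonempty_of_mem_parts hp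
    exact ⟨{a}, Finpartition.mem_bot_iff.2 ⟨a, σ.subset hp ha, rfl⟩,
      fun b hb ↦ mem_singleton.2 (card_le_one.1 (h p hp) b hb a ha)⟩

lemma disjoint_iff_card_inter_parts_le_one :
    Disjoint σ τ ↔ ∀ p ∈ σ.parts, ∀ q ∈ τ.parts, #(p ∩ q) ≤ 1 := by
  rw [disjoint_iff, eq_bot_iff_card_parts_le_one]
  simp only [Finpartition.parts_inf, mem_erase, mem_image, mem_product, inf_eq_inter,
    bot_eq_empty, Prod.exists]
  constructor
  · intro h p hp q hq
    rcases (p ∩ q).eq_empty_or_nonempty with hpq | hpq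
    · simp [hpq]
    · exact h _ ⟨hpq.ne_empty, p, q, ⟨hp, hq⟩, rfl⟩
  · rintro h _ ⟨-, p, q, ⟨hp, hq⟩, rfl⟩
    exact h p hp q hq

lemma card_le_card_parts_of_disjoint (h : Disjoint σ τ) {p : Finset α} (hp : p ∈ σ.parts) :
    #p ≤ #τ.parts := by
  refine card_le_card_of_injOn τ.part (fun a ha ↦ τ.part_mem.2 (σ.subset hp ha)) ?_
  intro a ha b hb hab
  have has := σ.subset hp ha
  have hbs := σ.subset hp hb
  have hinter := disjoint_iff_card_inter_parts_le_one.1 h p hp _ (τ.part_mem.2 hbs)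
  exact card_le_one.1 hinter a (mem_inter.2 ⟨ha, hab ▸ τ.mem_part has⟩)
    b (mem_inter.2 ⟨hb, τ.mem_part hbs⟩)

lemma card_parts_mul_of_forall_card_eq {k : ℕ} (h : ∀ p ∈ σ.parts, #p = k) :
    #σ.parts * k = #s := by
  rw [← σ.sum_card_parts, sum_const_nat h]

end Finpartition

section SingleBlock

variable {α : Type*} [Fintype α] [DecidableEq α] {σ : Finpartition (univ : Finset α)}
  {S T : Finset α} {m : ℕ}

/-- The set partition with block `T` and every other point in a singleton block, the basic
element of the partition lattice out of which atoms and hook-shaped partitions are made.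
For `T = ∅` it is `⊥`. -/
def singleBlock (T : Finset α) : Finpartition (univ : Finset α) :=
  (⊥ : Finpartition Tᶜ).extendOfLE (subset_univ _)

lemma parts_singleBlock (hT : T.Nonempty) :
    (singleBlock T).parts = insert T (Tᶜ.map ⟨singleton, singleton_injective⟩) := by
  have hlt : Tᶜ < univ := by simpa [ssubset_univ_iff, compl_eq_univ_iff] using hT.ne_empty
  simpa [singleBlock, ← compl_eq_univ_sdiff] using (⊥ : Finpartition Tᶜ).parts_extendOfLE_of_lt hlt

lemma mem_parts_singleBlock (hT : T.Nonempty) {p : Finset α} :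
    p ∈ (singleBlock T).parts ↔ p = T ∨ ∃ a ∉ T, {a} = p := by
  simp [parts_singleBlock hT]

lemma singleBlock_le_iff (hT : T.Nonempty) : singleBlock T ≤ σ ↔ ∃ p ∈ σ.parts, T ⊆ p := by
  constructor
  · exact fun h ↦ h ((mem_parts_singleBlock hT).2 (.inl rfl))
  · rintro ⟨p, hp, hTp⟩ q hq
    rcases (mem_parts_singleBlock hT).1 hq with rfl | ⟨a, -, rfl⟩
    · exact ⟨p, hp, hTp⟩
    · exact ⟨σ.part a, σ.part_mem.2 (mem_univ a),
        singleton_subset_iff.2 (σ.mem_part (mem_univ a))⟩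

lemma singleBlock_le_singleBlock (hS : 1 < #S) (hT : T.Nonempty) :
    singleBlock S ≤ singleBlock T ↔ S ⊆ T := by
  rw [singleBlock_le_iff (card_pos.1 (by lia))]
  constructor
  · rintro ⟨p, hp, hSp⟩
    rcases (mem_parts_singleBlock hT).1 hp with rfl | ⟨a, -, rfl⟩
    · exact hSp
    · have := card_le_card hSp
      rw [card_singleton] at this
      lia
  · exact fun h ↦ ⟨T, (mem_parts_singleBlock hT).2 (.inl rfl), h⟩

lemma injOn_singleBlock : Set.InjOn (singleBlock (α := α)) {T | 1 < #T} := by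
  intro S (hS : 1 < #S) T (hT : 1 < #T) hST
  exact ((singleBlock_le_singleBlock hS (card_pos.1 (by lia))).1 hST.le).antisymm
    ((singleBlock_le_singleBlock hT (card_pos.1 (by lia))).1 hST.ge)

lemma eq_singleBlock (hT : T ∈ σ.parts) (h : ∀ p ∈ σ.parts, p = T ∨ #p = 1) :
    σ = singleBlock T := by
  have hne := σ.nonempty_of_mem_parts hT
  refine le_antisymm (fun p hp ↦ ?_) ((singleBlock_le_iff hne).2 ⟨T, hT, Subset.rfl⟩)
  rcases h p hp with rfl | hp1
  · exact ⟨p, (mem_parts_singleBlock hne).2 (.inl rfl), le_rfl⟩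
  · obtain ⟨a, rfl⟩ := card_eq_one.1 hp1
    obtain ⟨q, hq, haq⟩ := (singleBlock T).exists_mem (mem_univ a)
    exact ⟨q, hq, singleton_subset_iff.2 haq⟩

lemma isAntichain_image_singleBlock (hm : 1 < m) :
    IsAntichain (· ≤ ·) (singleBlock '' {T : Finset α | #T = m}) := by
  rintro _ ⟨S, hS : #S = m, rfl⟩ _ ⟨T, hT : #T = m, rfl⟩ hne hle
  have hST := (singleBlock_le_singleBlock (by lia) (card_pos.1 (by lia))).1 hle
  exact hne (congrArg singleBlock (eq_of_subset_of_card_le hST (by lia)))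

lemma exists_mem_parts_le_card_iff (hm : 0 < m) :
    (∃ p ∈ σ.parts, m ≤ #p) ↔ σ ∈ upperClosure (singleBlock '' {T : Finset α | #T = m}) := by
  simp only [mem_upperClosure, Set.exists_mem_image]
  constructor
  · rintro ⟨p, hp, hmp⟩
    obtain ⟨T, hTp, hT⟩ := exists_subset_card_eq hmp
    exact ⟨T, hT, (singleBlock_le_iff (card_pos.1 (by lia))).2 ⟨p, hp, hTp⟩⟩
  · rintro ⟨T, hT : #T = m, hle⟩
    obtain ⟨p, hp, hTp⟩ := (singleBlock_le_iff (card_pos.1 (by lia))).1 hle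
    exact ⟨p, hp, hT ▸ card_le_card hTp⟩

lemma minimal_exists_mem_parts_le_card_iff (hm : 1 < m) :
    Minimal (fun τ : Finpartition (univ : Finset α) ↦ ∃ p ∈ τ.parts, m ≤ #p) σ ↔
      σ ∈ singleBlock '' {T : Finset α | #T = m} := by
  simp only [exists_mem_parts_le_card_iff (zero_lt_one.trans hm)]
  exact (isAntichain_image_singleBlock hm).minimal_mem_upperClosure_iff_mem

lemma isAtom_iff_mem_image_singleBlock :
    IsAtom σ ↔ σ ∈ singleBlock '' {T : Finset α | #T = 2} := by
  rw [isAtom_iff_minimal_ne_bot, ← minimal_exists_mem_parts_le_card_iff one_lt_two]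
  simp only [ne_eq, eq_bot_iff_card_parts_le_one, not_forall, not_le, exists_prop]
  rfl

lemma isAtom_singleBlock_pair {a b : α} (hab : a ≠ b) : IsAtom (singleBlock {a, b}) :=
  isAtom_iff_mem_image_singleBlock.2 ⟨_, card_pair hab, rfl⟩

lemma ncard_atoms_le_singleBlock (hT : T.Nonempty) :
    {l | IsAtom l ∧ l ≤ singleBlock T}.ncard = (#T).choose 2 := by
  have himage : {l | IsAtom l ∧ l ≤ singleBlock T} = singleBlock '' (powersetCard 2 T : Set _) := by
    ext l
    simp only [isAtom_iff_mem_image_singleBlock, Set.mem_ofPred_eq, Set.mem_image, mem_coe,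
      mem_powersetCard]
    constructor
    · rintro ⟨⟨S, hS, rfl⟩, hle⟩
      exact ⟨S, ⟨(singleBlock_le_singleBlock (by lia) hT).1 hle, hS⟩, rfl⟩
    · rintro ⟨S, ⟨hST, hS⟩, rfl⟩
      exact ⟨⟨S, hS, rfl⟩, (singleBlock_le_singleBlock (by lia) hT).2 hST⟩
  have hinj : Set.InjOn singleBlock (powersetCard 2 T : Set (Finset α)) :=
    injOn_singleBlock.mono fun S hS ↦ (mem_powersetCard.1 hS).2.ge
  rw [himage, hinj.ncard_image, Set.ncard_coe_finset, card_powersetCard]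

/-- The star at `z`: the atoms of the partition lattice given by the edges of the complete graph
incident to `z`. It is the small intersecting set of atoms that violates the Turán property. -/
def starAtoms (z : α) : Set (Finpartition (univ : Finset α)) :=
  (fun a ↦ singleBlock {z, a}) '' {z}ᶜ

lemma isAtom_of_mem_starAtoms {z : α} (h : σ ∈ starAtoms z) : IsAtom σ := by
  obtain ⟨a, ha, rfl⟩ := h
  exact isAtom_singleBlock_pair (Ne.symm ha)

lemma ncard_starAtoms (z : α) : (starAtoms z).ncard = Fintype.card α - 1 := by
  have hinj : Set.InjOn (fun a ↦ singleBlock {z, a}) {z}ᶜ := by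
    intro a ha b hb hab
    have hpair : ({z, a} : Finset α) = {z, b} :=
      injOn_singleBlock (card_pair (Ne.symm ha)).ge (card_pair (Ne.symm hb)).ge hab
    have haz : a ∈ ({z, b} : Finset α) := hpair ▸ mem_insert_of_mem (mem_singleton_self a)
    exact (mem_insert.1 haz).elim (absurd · ha) mem_singleton.1
  rw [starAtoms, hinj.ncard_image, Set.ncard_compl, Set.ncard_singleton, Nat.card_eq_fintype_card]

lemma exists_mem_starAtoms_le {z : α} (h : 1 < #(σ.part z)) : ∃ l ∈ starAtoms z, l ≤ σ := by
  obtain ⟨a, ha, haz⟩ := exists_mem_ne h z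
  refine ⟨_, ⟨a, haz, rfl⟩, (singleBlock_le_iff (insert_nonempty _ _)).2
    ⟨σ.part z, σ.part_mem.2 (mem_univ z), ?_⟩⟩
  exact insert_subset (σ.mem_part (mem_univ z)) (singleton_subset_iff.2 ha)

end SingleBlock

section Transversal

variable {α β : Type*} {k r : ℕ}

lemma ne_of_ordConnected_fiber_of_card_fiber_le [DecidableEq β] {n : ℕ} {g : Fin n → β}
    (hg : ∀ b, (g ⁻¹' {b}).OrdConnected) (hr : ∀ i, #{j | g j = g i} ≤ r) {i j : Fin n}
    (hij : (i : ℕ) + r ≤ j) : g i ≠ g j := by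
  intro heq
  have hsub : Icc i j ⊆ ({l | g l = g i} : Finset (Fin n)) := fun l hl ↦
    mem_filter.2 ⟨mem_univ l, (hg (g i)).out rfl heq.symm (mem_Icc.1 hl)⟩
  have hcard := (card_le_card hsub).trans (hr i)
  rw [Fin.card_Icc] at hcard
  lia

variable [Fintype α]

lemma exists_equiv_fin_ordConnected_fiber (f : α → β) {n : ℕ} (hn : Fintype.card α = n) :
    ∃ e : Fin n ≃ α, ∀ b, ((f ∘ e) ⁻¹' {b}).OrdConnected := by
  let : LinearOrder β := IsWellOrder.linearOrder WellOrderingRel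
  let e₀ := (Fintype.equivFinOfCardEq hn).symm
  exact ⟨(Tuple.sort (f ∘ e₀)).trans e₀,
    fun _ ↦ Set.ordConnected_singleton.preimage_mono (Tuple.monotone_sort (f ∘ e₀))⟩

lemma exists_equiv_prod_injective [DecidableEq β] (hcard : Fintype.card α = k * r)
    {f : α → β} (hf : ∀ a, #{b | f b = f a} ≤ r) :
    ∃ e : Fin k × Fin r ≃ α, ∀ j, Function.Injective fun i ↦ f (e (i, j)) := by
  obtain ⟨e, he⟩ := exists_equiv_fin_ordConnected_fiber f hcard
  have hfiber (i) : #{j | (f ∘ e) j = (f ∘ e) i} ≤ r := by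
    refine (card_le_card_of_injOn e ?_ e.injective.injOn).trans (hf (e i))
    simp [Set.MapsTo]
  have hne {i i' j} (hii' : i < i') : f (e (finProdFinEquiv (i, j))) ≠
      f (e (finProdFinEquiv (i', j))) := by
    refine ne_of_ordConnected_fiber_of_card_fiber_le he hfiber ?_
    have := Nat.mul_le_mul_left r (Nat.succ_le_of_lt (Fin.lt_def.1 hii'))
    simp only [finProdFinEquiv_apply_val]
    lia
  refine ⟨finProdFinEquiv.trans e, fun j i i' heq ↦ ?_⟩
  by_contra hii'
  exact (lt_or_gt_of_ne hii').elim (hne · heq) (hne · heq.symm)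

variable [DecidableEq α] {σ : Finpartition (univ : Finset α)}

lemma exists_finpartition_parts_eq_image (hk : 0 < k) (e : Fin k × Fin r ≃ α) :
    ∃ τ : Finpartition (univ : Finset α),
      τ.parts = univ.image fun j ↦ univ.image fun i ↦ e (i, j) := by
  refine ⟨.ofExistsUnique _ (fun _ _ ↦ subset_univ _) (fun a _ ↦ ?_) ?_, rfl⟩
  · refine ⟨univ.image fun i ↦ e (i, (e.symm a).2), ⟨mem_image_of_mem _ (mem_univ _), ?_⟩, ?_⟩
    · exact mem_image.2 ⟨(e.symm a).1, mem_univ _, e.apply_symm_apply a⟩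
    · rintro _ ⟨hq, ha⟩
      obtain ⟨j, -, rfl⟩ := mem_image.1 hq
      obtain ⟨i, -, rfl⟩ := mem_image.1 ha
      rw [e.symm_apply_apply]
  · have : Nonempty (Fin k) := ⟨⟨0, hk⟩⟩
    simp [univ_nonempty.ne_empty]

lemma exists_disjoint_forall_card_eq (hk : 0 < k) (hcard : Fintype.card α = k * r)
    (hσ : ∀ p ∈ σ.parts, #p ≤ r) :
    ∃ τ : Finpartition (univ : Finset α), (∀ q ∈ τ.parts, #q = k) ∧ Disjoint σ τ := by
  have hfiber (a : α) : #{b | σ.part b = σ.part a} ≤ r := by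
    simpa [← σ.mem_part_iff_part_eq_part] using hσ _ (σ.part_mem.2 (mem_univ a))
  obtain ⟨e, he⟩ := exists_equiv_prod_injective hcard hfiber
  obtain ⟨τ, hτ⟩ := exists_finpartition_parts_eq_image hk e
  refine ⟨τ, fun q hq ↦ ?_, disjoint_iff_card_inter_parts_le_one.2 fun p hp q hq ↦ ?_⟩
  all_goals obtain ⟨j, -, rfl⟩ := mem_image.1 (hτ ▸ hq)
  · rw [card_image_of_injective _ fun i i' h ↦ he j (congrArg σ.part h), card_fin]
  · refine card_le_one.2 fun a ha b hb ↦ ?_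
    obtain ⟨hap, haq⟩ := mem_inter.1 ha
    obtain ⟨hbp, hbq⟩ := mem_inter.1 hb
    obtain ⟨i, -, rfl⟩ := mem_image.1 haq
    obtain ⟨i', -, rfl⟩ := mem_image.1 hbq
    rw [he j ((σ.part_eq_of_mem hp hap).trans (σ.part_eq_of_mem hp hbp).symm)]

lemma forall_not_disjoint_iff_exists_lt_card (hk : 0 < k) (hcard : Fintype.card α = k * r) :
    (∀ τ ∈ {τ : Finpartition (univ : Finset α) | ∀ q ∈ τ.parts, #q = k}, ¬ Disjoint σ τ) ↔
      ∃ p ∈ σ.parts, r < #p := by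
  constructor
  · contrapose!
    exact exists_disjoint_forall_card_eq hk hcard
  · rintro ⟨p, hp, hrp⟩ τ hτ hdisj
    have hparts : #τ.parts = r := by
      have := card_parts_mul_of_forall_card_eq hτ
      rw [card_univ, hcard, mul_comm] at this
      exact Nat.eq_of_mul_eq_mul_left hk this
    exact (hrp.trans_le (card_le_card_parts_of_disjoint hdisj hp)).ne' hparts

theorem blocker_setOf_forall_card_eq (hk : 0 < k) (hr : 0 < r) (hcard : Fintype.card α = k * r) :
    blocker {τ : Finpartition (univ : Finset α) | ∀ q ∈ τ.parts, #q = k} =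
      singleBlock '' {T | #T = r + 1} := by
  ext σ
  simp only [mem_blocker_iff_minimal, forall_not_disjoint_iff_exists_lt_card hk hcard]
  exact minimal_exists_mem_parts_le_card_iff (Nat.succ_lt_succ hr)

end Transversal

section Shape

lemma fi_matchingShape (r : ℕ) :
    fi {matchingShape r} = {σ | ∀ p ∈ σ.parts, #p = 2} := by
  ext σ
  change shape σ = matchingShape r ↔ _
  rw [Nat.Partition.ext_iff]
  change σ.parts.val.map card = Multiset.replicate r 2 ↔ _
  simp only [Multiset.eq_replicate, Multiset.card_map, card_val, Multiset.mem_map, mem_val,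
    forall_exists_index, and_imp, forall_apply_eq_imp_iff₂]
  refine and_iff_right_of_imp fun h ↦ ?_
  have := card_parts_mul_of_forall_card_eq h
  rw [card_univ, Fintype.card_fin] at this
  lia

variable {n : ℕ}

lemma shape_singleBlock {p : ℕ} (hp : 0 < p) (hpn : p ≤ n) {T : Finset (Fin n)} (hT : #T = p) :
    shape (singleBlock T) = hook n p hp hpn := by
  have hnotMem : T ∉ Tᶜ.map ⟨singleton, singleton_injective⟩ := by
    simp only [mem_map, mem_compl, Function.Embedding.coeFn_mk, not_exists, not_and]
    rintro a ha rfl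
    exact ha (mem_singleton_self a)
  ext1
  change (singleBlock T).parts.val.map card = p ::ₘ Multiset.replicate (n - p) 1
  rw [parts_singleBlock (card_pos.1 (hT ▸ hp)), insert_val_of_notMem hnotMem]
  simp [hT, card_compl]

lemma exists_eq_singleBlock_of_shape_eq_hook {p : ℕ} {hp : 0 < p} {hpn : p ≤ n} {σ : SetPart n}
    (h : shape σ = hook n p hp hpn) : ∃ T : Finset (Fin n), #T = p ∧ singleBlock T = σ := by
  have hparts : σ.parts.val.map card = p ::ₘ Multiset.replicate (n - p) 1 :=
    congrArg Nat.Partition.parts h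
  obtain ⟨T, hT, rfl⟩ := Multiset.mem_map.1 (hparts ▸ Multiset.mem_cons_self _ _)
  obtain ⟨s, hs⟩ := Multiset.exists_cons_of_mem hT
  rw [hs, Multiset.map_cons, Multiset.cons_inj_right, Multiset.eq_replicate] at hparts
  refine ⟨T, rfl, (eq_singleBlock hT fun q hq ↦ ?_).symm⟩
  rw [← mem_val, hs, Multiset.mem_cons] at hq
  exact hq.imp_right fun hqs ↦ hparts.2 _ (Multiset.mem_map_of_mem _ hqs)

lemma fi_hook {p : ℕ} (hp : 0 < p) (hpn : p ≤ n) :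
    fi {hook n p hp hpn} = singleBlock '' {T | #T = p} := by
  ext σ
  exact ⟨exists_eq_singleBlock_of_shape_eq_hook,
    fun ⟨_, hT, hσ⟩ ↦ hσ ▸ shape_singleBlock hp hpn hT⟩

lemma blocker_fi_matchingShape {r : ℕ} (hr : 0 < r) :
    blocker (fi {matchingShape r}) = singleBlock '' {T | #T = r + 1} := by
  rw [fi_matchingShape]
  exact blocker_setOf_forall_card_eq two_pos hr (Fintype.card_fin _)

end Shape

/-- Example 4.4: for `r ≥ 3`, in `Π_{2r}` the blocker of `fi((2^r))` is
`fi((r+1, 1^{r-1}))`, and `fi((2^r))` does not have the Turán property: the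
`2r - 1` edges of a star form an `fi((2^r))`-intersecting set of atoms, smaller
than `|Λ(b)| = (r+1)r/2` for every `b` in the blocker. -/
theorem matching_blocker_and_not_turan (r : ℕ) (hr : 3 ≤ r) :
    blocker (fi {matchingShape r}) =
        fi {hook (2 * r) (r + 1) (by omega) (by omega)} ∧
      ∃ S : Set (SetPart (2 * r)),
        (∀ l ∈ S, IsAtom l) ∧
        S.ncard = 2 * r - 1 ∧
        (∀ a ∈ fi {matchingShape r}, ∃ l ∈ S, l ≤ a) ∧
        (∀ b ∈ blocker (fi {matchingShape r}),
          {l : SetPart (2 * r) | IsAtom l ∧ l ≤ b}.ncard = (r + 1) * r / 2) ∧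
        2 * r - 1 < (r + 1) * r / 2 := by
  have hblocker := blocker_fi_matchingShape (r := r) (by lia)
  let z : Fin (2 * r) := ⟨0, by lia⟩
  refine ⟨by rw [hblocker, fi_hook], starAtoms z, fun _ ↦ isAtom_of_mem_starAtoms, ?_, ?_, ?_, ?_⟩
  · rw [ncard_starAtoms, Fintype.card_fin]
  · intro a ha
    rw [fi_matchingShape] at ha
    exact exists_mem_starAtoms_le (ha _ (a.part_mem.2 (mem_univ z))).ge
  · rw [hblocker]
    rintro _ ⟨T, hT : #T = r + 1, rfl⟩
    rw [ncard_atoms_le_singleBlock (card_pos.1 (by lia)), hT, Nat.choose_two_right,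
      Nat.add_sub_cancel]
  · have : 4 * r ≤ (r + 1) * r := Nat.mul_le_mul_right r (by lia)
    lia
end

section
/- Let q be a prime power, n ≥ 1, and 1 ≤ k ≤ n. In the lattice L_q^n of all linear subspaces of F_q^n ordered by inclusion, the antichain A_k consisting of all k-dimensional subspaces has the Turán property: the smallest cardinality of a set S of 1-dimensional subspaces (the atoms of L_q^n) such that every k-dimensional subspace contains a member of S equals 1 + q + q^2 + ⋯ + q^{n-k}, which is the number of 1-dimensional subspaces contained in an (n − k + 1)-dimensional subspace. -/
/-!
Lower bound: a subspace `X` containing no member of `S` extends to one of dimension one larger as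
long as `V ⧸ X` has more than `#S` lines. Some line `H` of `V ⧸ X` is then the image of no member of
`S`, and a member `W` contained in the preimage of `H` would have an image properly below the atom
`H`, that is, would lie in `X`. Starting from `⊥`, fewer than `1 + q + ⋯ + q ^ (n - k)` subspaces
can be avoided up to dimension `k`.

Upper bound: by the dimension formula, the lines of a fixed subspace of dimension `n - k + 1` meet
every subspace of dimension `k`.
-/

open Module Submodule

/-- The set `Λ(x)` of atoms below an element `x` of a lattice. In the lattice of subspaces of a
vector space these are the one-dimensional subspaces contained in `x`. -/
def atomsBelow {α : Type*} [PartialOrder α] [OrderBot α] (x : α) : Set α :=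
  {a | IsAtom a ∧ a ≤ x}

section DivisionRing

variable {K V V' : Type*} [DivisionRing K] [AddCommGroup V] [Module K V] [AddCommGroup V']
  [Module K V']

theorem finrank_comap_of_surjective [FiniteDimensional K V] {f : V →ₗ[K] V'}
    (hf : Function.Surjective f) (P : Submodule K V') :
    finrank K (P.comap f) = finrank K P + finrank K (LinearMap.ker f) := by
  have hker : LinearMap.ker f ≤ P.comap f := LinearMap.ker_le_comap f
  rw [← LinearMap.finrank_range_add_finrank_ker (f.domRestrict (P.comap f)),
    LinearMap.range_domRestrict, map_comap_eq_of_surjective hf, LinearMap.ker_domRestrict,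
    (comapSubtypeEquivOfLe hker).finrank_eq]

theorem exists_submodule_finrank_eq {m : ℕ} (hm : m ≤ finrank K V) :
    ∃ Y : Submodule K V, finrank K Y = m := by
  obtain ⟨v, hv⟩ := exists_linearIndependent_of_le_finrank hm
  exact ⟨span K (Set.range v), by simpa using finrank_span_eq_card hv⟩

theorem exists_mem_atomsBelow_le [FiniteDimensional K V] {X Y : Submodule K V}
    (h : finrank K V < finrank K X + finrank K Y) : ∃ L ∈ atomsBelow Y, L ≤ X := by
  have hXY : X ⊓ Y ≠ ⊥ := fun hbot ↦
    h.not_ge (finrank_add_finrank_le_of_disjoint (disjoint_iff.mpr hbot))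
  obtain ⟨L, hL, hLXY⟩ := (eq_bot_or_exists_atom_le (X ⊓ Y)).resolve_left hXY
  exact ⟨L, ⟨hL, hLXY.trans inf_le_right⟩, hLXY.trans inf_le_left⟩

end DivisionRing

section FiniteField

variable {F V : Type*} [Field F] [Finite F] [AddCommGroup V] [Module F V]

theorem ncard_atomsBelow (Y : Submodule F V) :
    (atomsBelow Y).ncard = ∑ i ∈ Finset.range (finrank F Y), Nat.card F ^ i := by
  let toLine (p : Projectivization F Y) : Submodule F V := p.submodule.map Y.subtype
  have toLine_injective : Function.Injective toLine :=
    (map_injective_of_injective Y.injective_subtype).comp Projectivization.submodule_injective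
  have range_toLine : Set.range toLine = atomsBelow Y := by
    ext L
    constructor
    · rintro ⟨p, rfl⟩
      exact ⟨isAtom_iff_finrank_eq_one.mpr <| by
        rw [finrank_map_subtype_eq, p.finrank_submodule], map_subtype_le Y _⟩
    · rintro ⟨hL, hLY⟩
      have hrank : finrank F (L.comap Y.subtype) = 1 := by
        rw [(comapSubtypeEquivOfLe hLY).finrank_eq, isAtom_iff_finrank_eq_one.mp hL]
      refine ⟨Projectivization.mk'' _ hrank, ?_⟩
      simp only [toLine, Projectivization.submodule_mk'', map_comap_subtype, inf_eq_right.mpr hLY]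
  rw [← range_toLine, ← Nat.card_coe_set_eq, Nat.card_range_of_injective toLine_injective,
    Projectivization.card_of_finrank F Y rfl]

theorem exists_finrank_eq_add_one_forall_not_le [FiniteDimensional F V]
    {S : Finset (Submodule F V)} {X : Submodule F V} (hX : ∀ W ∈ S, ¬ W ≤ X)
    (hS : S.card < ∑ i ∈ Finset.range (finrank F (V ⧸ X)), Nat.card F ^ i) :
    ∃ Y : Submodule F V, finrank F Y = finrank F X + 1 ∧ ∀ W ∈ S, ¬ W ≤ Y := by
  classical
  have hcard : (S.image (map X.mkQ) : Set (Submodule F (V ⧸ X))).ncard <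
      (atomsBelow (⊤ : Submodule F (V ⧸ X))).ncard := by
    rw [ncard_atomsBelow, finrank_top, Set.ncard_coe_finset]
    exact Finset.card_image_le.trans_lt hS
  obtain ⟨H, ⟨hH, -⟩, hHS⟩ := Set.exists_mem_notMem_of_ncard_lt_ncard hcard
  refine ⟨H.comap X.mkQ, ?_, fun W hW hWY ↦ ?_⟩
  · rw [finrank_comap_of_surjective X.mkQ_surjective, ker_mkQ,
      isAtom_iff_finrank_eq_one.mp hH, add_comm]
  · rcases hH.le_iff.mp (map_le_iff_le_comap.mpr hWY) with hbot | hline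
    · exact hX W hW (by simpa only [ker_mkQ] using LinearMap.le_ker_iff_map.mpr hbot)
    · exact hHS (Finset.mem_coe.mpr (Finset.mem_image.mpr ⟨W, hW, hline⟩))

theorem exists_finrank_eq_forall_not_le [FiniteDimensional F V] {S : Finset (Submodule F V)}
    (hS : ⊥ ∉ S) {k : ℕ}
    (hcard : S.card < ∑ i ∈ Finset.range (finrank F V + 1 - k), Nat.card F ^ i) :
    ∃ Y : Submodule F V, finrank F Y = k ∧ ∀ W ∈ S, ¬ W ≤ Y := by
  induction k with
  | zero => exact ⟨⊥, finrank_bot F V, fun W hW hle ↦ hS (le_bot_iff.mp hle ▸ hW)⟩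
  | succ k ih =>
    have hmono : ∑ i ∈ Finset.range (finrank F V + 1 - (k + 1)), Nat.card F ^ i ≤
        ∑ i ∈ Finset.range (finrank F V + 1 - k), Nat.card F ^ i :=
      Finset.sum_le_sum_of_subset (Finset.range_mono (by omega))
    obtain ⟨X, rfl, hX⟩ := ih (hcard.trans_le hmono)
    refine exists_finrank_eq_add_one_forall_not_le hX ?_
    rwa [finrank_quotient, ← Nat.add_sub_add_right _ 1]

theorem grassmannian_turan_property_general [FiniteDimensional F V] {k : ℕ} (hk : 1 ≤ k)
    (hkV : k ≤ finrank F V) :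
    IsLeast {m : ℕ | ∃ S : Finset (Submodule F V), S.card = m ∧
        (∀ W ∈ S, finrank F W = 1) ∧
        ∀ X : Submodule F V, finrank F X = k → ∃ W ∈ S, W ≤ X}
      (∑ i ∈ Finset.range (finrank F V - k + 1), Nat.card F ^ i) := by
  have : Finite V := Module.finite_of_finite F
  constructor
  · obtain ⟨Y, hY⟩ := exists_submodule_finrank_eq (K := F) (V := V)
      (show finrank F V - k + 1 ≤ finrank F V by omega)
    have hfin : (atomsBelow Y).Finite := Set.toFinite _
    refine ⟨hfin.toFinset, ?_, fun W hW ↦ ?_, fun X hX ↦ ?_⟩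
    · rw [← Set.ncard_eq_toFinset_card _ hfin, ncard_atomsBelow, hY]
    · exact isAtom_iff_finrank_eq_one.mp (hfin.mem_toFinset.mp hW).1
    · simpa only [hfin.mem_toFinset] using
        exists_mem_atomsBelow_le (X := X) (Y := Y) (by omega)
  · rintro _ ⟨S, rfl, hS, hmeets⟩
    have hbot : ⊥ ∉ S := fun hmem ↦ by simpa using hS ⊥ hmem
    by_contra! hlt
    rw [← Nat.sub_add_comm hkV] at hlt
    obtain ⟨Y, hY, hYS⟩ := exists_finrank_eq_forall_not_le hbot hlt
    obtain ⟨W, hW, hWY⟩ := hmeets Y hY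
    exact hYS W hW hWY

end FiniteField

/-- Proposition 5.4 (blocking sets in `PG(n,q)`): in the lattice `L_q^n` of all linear
subspaces of `F_q^n` (where `q` is the cardinality of the finite field `F`), the
antichain of all `k`-dimensional subspaces has the Turán property: the smallest
cardinality of a set `S` of 1-dimensional subspaces (the atoms of `L_q^n`) meeting
every `k`-dimensional subspace equals `1 + q + ⋯ + q^{n-k}`, the number of
1-dimensional subspaces of an `(n-k+1)`-dimensional space. -/
theorem grassmannian_turan_property {F : Type*} [Field F] [Fintype F]
    (n k : ℕ) (hk : 1 ≤ k) (hkn : k ≤ n) :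
    sInf {m : ℕ | ∃ S : Finset (Submodule F (Fin n → F)), S.card = m ∧
        (∀ W ∈ S, Module.finrank F W = 1) ∧
        ∀ X : Submodule F (Fin n → F), Module.finrank F X = k → ∃ W ∈ S, W ≤ X} =
      ∑ i ∈ Finset.range (n - k + 1), Fintype.card F ^ i := by
  simpa only [Module.finrank_fin_fun, Nat.card_eq_fintype_card] using
    (grassmannian_turan_property_general (F := F) (V := Fin n → F) hk (by simpa using hkn)).csInf_eq
end
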